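/- Let f(t,x;τ,ξ) be a polynomial of degree 2 in (τ,ξ) ∈ ℝ×ℝⁿ with real-analytic coefficients on an open set U ⊂ ℝ×ℝⁿ and homogeneous decomposition f = f₂+f₁+f₀. Let ψ be real-analytic with Σ = {(t,x)∈U : t=ψ(x)}, and assume for a nonzero constant a that 1 − |∇ψ(x)|² = a·f₂(ψ(x),x;−1,∇ψ(x)) for all x with (ψ(x),x) ∈ U. If v is any real-analytic function on a neighborhood of Σ and u(t,x) = −a·log(t−ψ(x)) + v(t,x), then the function (t,x) ↦ (t−ψ(x))²·( u_tt − Δu − f(t,x;∂_t u,∇u) ), defined on {t > ψ(x)} near Σ, extends to a real-analytic function on a full neighborhood of Σ whose restriction to Σ vanishes; that is, the 1/(t−ψ)² singularity of u_tt − Δu − f(t,x;∂_t u,∇u) cancels exactly under the stated condition. -/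

import Mathlib

open Real Filter

/-- partial derivative in `t` of a function `u(t,x)` -/
noncomputable def ptd {n : ℕ} (u : ℝ → (Fin n → ℝ) → ℝ) (t : ℝ) (x : Fin n → ℝ) : ℝ :=
  deriv (fun s => u s x) t

/-- partial derivative in `x i` of a function `u(t,x)` -/
noncomputable def pxd {n : ℕ} (i : Fin n) (u : ℝ → (Fin n → ℝ) → ℝ) (t : ℝ)
    (x : Fin n → ℝ) : ℝ :=
  deriv (fun y => u t (Function.update x i y)) (x i)

/-- Laplacian in `x` of a function `u(t,x)` -/
noncomputable def lapx {n : ℕ} (u : ℝ → (Fin n → ℝ) → ℝ) (t : ℝ) (x : Fin n → ℝ) : ℝ :=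
  ∑ i, pxd i (pxd i u) t x

/-- gradient in `x` of a function `u(t,x)` -/
noncomputable def gradx {n : ℕ} (u : ℝ → (Fin n → ℝ) → ℝ) (t : ℝ) (x : Fin n → ℝ) :
    Fin n → ℝ :=
  fun i => pxd i u t x

/-- gradient of a function of `x` alone -/
noncomputable def gradp {n : ℕ} (ψ : (Fin n → ℝ) → ℝ) (x : Fin n → ℝ) : Fin n → ℝ :=
  fun i => deriv (fun y => ψ (Function.update x i y)) (x i)

/-- `g(t,x;τ,ξ)` is a polynomial homogeneous of degree `l` in `(τ,ξ) ∈ ℝ × ℝⁿ` whose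
coefficients are real-analytic functions of `(t,x)` on `U`. -/
def HomogPoly {n : ℕ} (l : ℕ) (U : Set (ℝ × (Fin n → ℝ)))
    (g : ℝ → (Fin n → ℝ) → ℝ → (Fin n → ℝ) → ℝ) : Prop :=
  ∃ c : (Fin l → Fin (n + 1)) → ℝ → (Fin n → ℝ) → ℝ,
    (∀ μ, AnalyticOnNhd ℝ (fun p : ℝ × (Fin n → ℝ) => c μ p.1 p.2) U) ∧
    ∀ t x τ ξ, g t x τ ξ =
      ∑ μ : Fin l → Fin (n + 1), c μ t x * ∏ k, (Fin.cons τ ξ : Fin (n + 1) → ℝ) (μ k)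

/-!
Replace `t - ψ(x)` by an arbitrary analytic function `φ` and let `u = -a log φ + v`. The chain rule
gives

* `φ u_t = -a φ_t + φ v_t` and `φ ∇u = -a ∇φ + φ ∇v`,
* `φ² □u = a (φ_t² - |∇φ|²) - a φ □φ + φ² □v`, where `□ = ∂_t² - Δ`,

and homogeneity lets the powers of `φ` be absorbed into the arguments of `f₂`, `f₁` and `f₀`. So
`φ² (□u - f)` is given by a formula analytic across `{φ = 0}`, whose value there is
`a (φ_t² - |∇φ|² - a f₂(φ_t, ∇φ))`. For `φ = t - ψ(x)` the bracket vanishes by assumption, `f₂`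
being even.
-/

section OneVariable

variable {φ w : ℝ → ℝ} {y : ℝ} (a : ℝ)

lemma deriv_neg_mul_log_add (hφ : DifferentiableAt ℝ φ y) (hw : DifferentiableAt ℝ w y)
    (h₀ : φ y ≠ 0) :
    deriv (fun z => -a * log (φ z) + w z) y = -a * (deriv φ y / φ y) + deriv w y :=
  (((hφ.hasDerivAt.log h₀).const_mul (-a)).add hw.hasDerivAt).deriv

lemma mul_deriv_neg_mul_log_add (hφ : DifferentiableAt ℝ φ y) (hw : DifferentiableAt ℝ w y)
    (h₀ : φ y ≠ 0) :
    φ y * deriv (fun z => -a * log (φ z) + w z) y = -a * deriv φ y + φ y * deriv w y := by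
  rw [deriv_neg_mul_log_add a hφ hw h₀]
  field_simp

lemma sq_mul_deriv_deriv_neg_mul_log_add (hφ : ContDiffAt ℝ 2 φ y) (hw : ContDiffAt ℝ 2 w y)
    (h₀ : φ y ≠ 0) :
    φ y ^ 2 * deriv (deriv fun z => -a * log (φ z) + w z) y =
      a * deriv φ y ^ 2 - a * φ y * deriv (deriv φ) y + φ y ^ 2 * deriv (deriv w) y := by
  have first_deriv : deriv (fun z => -a * log (φ z) + w z) =ᶠ[nhds y]
      fun z => -a * (deriv φ z / φ z) + deriv w z := by
    filter_upwards [hφ.eventually (by simp), hw.eventually (by simp),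
      hφ.continuousAt.eventually_ne h₀] with z hφz hwz hz
    exact deriv_neg_mul_log_add a (hφz.differentiableAt two_ne_zero)
      (hwz.differentiableAt two_ne_zero) hz
  have hφ' : HasDerivAt (deriv φ) (deriv (deriv φ) y) y :=
    ((hφ.derivWithin one_add_one_eq_two.le).differentiableAt one_ne_zero).hasDerivAt
  have hw' : HasDerivAt (deriv w) (deriv (deriv w) y) y :=
    ((hw.derivWithin one_add_one_eq_two.le).differentiableAt one_ne_zero).hasDerivAt
  have hφy := (hφ.differentiableAt two_ne_zero).hasDerivAt
  rw [first_deriv.deriv_eq, (((hφ'.fun_div hφy h₀).const_mul (-a)).fun_add hw').deriv]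
  field_simp
  ring

end OneVariable

lemma analyticAt_lineDeriv {𝕜 E F : Type*} [NontriviallyNormedField 𝕜] [NormedAddCommGroup E]
    [NormedSpace 𝕜 E] [NormedAddCommGroup F] [NormedSpace 𝕜 F] [CompleteSpace F] {f : E → F}
    {p : E} (hf : AnalyticAt 𝕜 f p) (e : E) : AnalyticAt 𝕜 (fun q => lineDeriv 𝕜 f q e) p := by
  have hfderiv : AnalyticAt 𝕜 (fun q => fderiv 𝕜 f q e) p :=
    ((ContinuousLinearMap.apply 𝕜 F e).analyticAt _).comp hf.fderiv
  refine hfderiv.congr ?_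
  filter_upwards [hf.eventually_analyticAt] with q hq
  exact hq.differentiableAt.lineDeriv_eq_fderiv.symm

section PartialDerivatives

variable {n : ℕ} {v : ℝ → (Fin n → ℝ) → ℝ} {t : ℝ} {x : Fin n → ℝ} {p : ℝ × (Fin n → ℝ)}

lemma ptd_eq_lineDeriv (v : ℝ → (Fin n → ℝ) → ℝ) (t : ℝ) (x : Fin n → ℝ) :
    ptd v t x = lineDeriv ℝ (fun q : ℝ × (Fin n → ℝ) => v q.1 q.2) (t, x) (1, 0) := by
  simp [ptd, lineDeriv, deriv_comp_const_add (f := fun s => v s x)]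

lemma pxd_eq_lineDeriv (i : Fin n) (v : ℝ → (Fin n → ℝ) → ℝ) (t : ℝ) (x : Fin n → ℝ) :
    pxd i v t x =
      lineDeriv ℝ (fun q : ℝ × (Fin n → ℝ) => v q.1 q.2) (t, x) (0, Pi.single i 1) := by
  have line (s : ℝ) : x + s • Pi.single i 1 = Function.update x i (x i + s) := by
    funext j
    rcases eq_or_ne j i with rfl | hj <;> simp [*]
  simp [pxd, lineDeriv, line, deriv_comp_const_add (f := fun y => v t (Function.update x i y))]

lemma pxd_pxd (i : Fin n) (v : ℝ → (Fin n → ℝ) → ℝ) (t : ℝ) (x : Fin n → ℝ) :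
    pxd i (pxd i v) t x = deriv (deriv fun y => v t (Function.update x i y)) (x i) := by
  simp only [pxd, Function.update_idem, Function.update_self]

lemma analyticAt_ptd (hv : AnalyticAt ℝ (fun q : ℝ × (Fin n → ℝ) => v q.1 q.2) p) :
    AnalyticAt ℝ (fun q : ℝ × (Fin n → ℝ) => ptd v q.1 q.2) p := by
  simpa only [ptd_eq_lineDeriv] using analyticAt_lineDeriv hv (1, 0)

lemma analyticAt_pxd (i : Fin n) (hv : AnalyticAt ℝ (fun q : ℝ × (Fin n → ℝ) => v q.1 q.2) p) :
    AnalyticAt ℝ (fun q : ℝ × (Fin n → ℝ) => pxd i v q.1 q.2) p := by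
  simpa only [pxd_eq_lineDeriv] using analyticAt_lineDeriv hv (0, Pi.single i 1)

lemma contDiffAt_slice_fst {k : WithTop ℕ∞}
    (hv : ContDiffAt ℝ k (fun q : ℝ × (Fin n → ℝ) => v q.1 q.2) (t, x)) :
    ContDiffAt ℝ k (fun s => v s x) t :=
  hv.comp t (contDiffAt_id.prodMk contDiffAt_const)

lemma contDiffAt_slice_update {k : WithTop ℕ∞} (i : Fin n)
    (hv : ContDiffAt ℝ k (fun q : ℝ × (Fin n → ℝ) => v q.1 q.2) (t, x)) :
    ContDiffAt ℝ k (fun y => v t (Function.update x i y)) (x i) := by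
  refine ContDiffAt.comp (g := fun q : ℝ × (Fin n → ℝ) => v q.1 q.2) (x i) ?_
    (contDiffAt_const.prodMk (contDiff_update k x i).contDiffAt)
  rwa [Function.update_eq_self]

end PartialDerivatives

namespace HomogPoly

variable {n l : ℕ} {U : Set (ℝ × (Fin n → ℝ))} {g : ℝ → (Fin n → ℝ) → ℝ → (Fin n → ℝ) → ℝ}

lemma mono {V : Set (ℝ × (Fin n → ℝ))} (h : HomogPoly l U g) (hVU : V ⊆ U) : HomogPoly l V g :=
  let ⟨c, hc, hg⟩ := h
  ⟨c, fun μ => (hc μ).mono hVU, hg⟩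

lemma map_smul (h : HomogPoly l U g) (t : ℝ) (x : Fin n → ℝ) (s τ : ℝ) (ξ : Fin n → ℝ) :
    g t x (s * τ) (s • ξ) = s ^ l * g t x τ ξ := by
  obtain ⟨c, -, hg⟩ := h
  have cons_smul (j : Fin (n + 1)) : (Fin.cons (s * τ) (s • ξ) : Fin (n + 1) → ℝ) j =
      s * (Fin.cons τ ξ : Fin (n + 1) → ℝ) j := by
    cases j using Fin.cases <;> simp
  simp only [hg, cons_smul, Finset.prod_mul_distrib, Finset.prod_const, Finset.card_univ,
    Fintype.card_fin, Finset.mul_sum, mul_left_comm]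

lemma map_neg (h : HomogPoly l U g) (t : ℝ) (x : Fin n → ℝ) (τ : ℝ) (ξ : Fin n → ℝ) :
    g t x (-τ) (-ξ) = (-1) ^ l * g t x τ ξ := by
  simpa only [neg_one_mul, neg_one_smul] using h.map_smul t x (-1) τ ξ

lemma analyticAt (h : HomogPoly l U g) {p : ℝ × (Fin n → ℝ)} (hp : p ∈ U)
    {τ : ℝ × (Fin n → ℝ) → ℝ} {ξ : ℝ × (Fin n → ℝ) → Fin n → ℝ} (hτ : AnalyticAt ℝ τ p)
    (hξ : ∀ i, AnalyticAt ℝ (fun q => ξ q i) p) :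
    AnalyticAt ℝ (fun q => g q.1 q.2 (τ q) (ξ q)) p := by
  obtain ⟨c, hc, hg⟩ := h
  have hcons (j : Fin (n + 1)) :
      AnalyticAt ℝ (fun q => (Fin.cons (τ q) (ξ q) : Fin (n + 1) → ℝ) j) p := by
    cases j using Fin.cases with
    | zero => simpa only [Fin.cons_zero] using hτ
    | succ i => simpa only [Fin.cons_succ] using hξ i
  simp only [hg]
  exact Finset.analyticAt_fun_sum _ fun μ _ =>
    (hc μ p hp).mul (Finset.analyticAt_fun_prod _ fun k _ => hcons (μ k))

end HomogPoly

/-- The wave operator `□ = ∂_t² - Δ`. -/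
noncomputable def dAlembertian {n : ℕ} (u : ℝ → (Fin n → ℝ) → ℝ) (t : ℝ) (x : Fin n → ℝ) : ℝ :=
  ptd (ptd u) t x - lapx u t x

/-- The principal symbol `φ_t² - |∇φ|²` of the wave operator at the differential of `φ`. -/
noncomputable def minkowskiForm {n : ℕ} (φ : ℝ → (Fin n → ℝ) → ℝ) (t : ℝ) (x : Fin n → ℝ) : ℝ :=
  ptd φ t x ^ 2 - ∑ i, gradx φ t x i ^ 2

/-- The left-hand side `□u - f(t,x;∂_t u,∇u)` of the semilinear wave equation, with `f` given by
its homogeneous parts. -/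
noncomputable def waveDefect {n : ℕ} (f₂ f₁ f₀ : ℝ → (Fin n → ℝ) → ℝ → (Fin n → ℝ) → ℝ)
    (u : ℝ → (Fin n → ℝ) → ℝ) (t : ℝ) (x : Fin n → ℝ) : ℝ :=
  dAlembertian u t x - (f₂ t x (ptd u t x) (gradx u t x) +
    f₁ t x (ptd u t x) (gradx u t x) + f₀ t x (ptd u t x) (gradx u t x))

/-- The ansatz `-a log φ + v`, singular on `{φ = 0}`. -/
noncomputable def logAnsatz {n : ℕ} (a : ℝ) (φ v : ℝ → (Fin n → ℝ) → ℝ) (t : ℝ)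
    (x : Fin n → ℝ) : ℝ :=
  -a * log (φ t x) + v t x

/-- The continuation `-a φ_t + φ v_t` of `φ ∂_t (logAnsatz a φ v)` to `{φ = 0}`. -/
noncomputable def scaledTimeDeriv {n : ℕ} (a : ℝ) (φ v : ℝ → (Fin n → ℝ) → ℝ) (t : ℝ)
    (x : Fin n → ℝ) : ℝ :=
  -a * ptd φ t x + φ t x * ptd v t x

/-- The continuation `-a ∇φ + φ ∇v` of `φ ∇ (logAnsatz a φ v)` to `{φ = 0}`. -/
noncomputable def scaledGrad {n : ℕ} (a : ℝ) (φ v : ℝ → (Fin n → ℝ) → ℝ) (t : ℝ)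
    (x : Fin n → ℝ) : Fin n → ℝ :=
  -a • gradx φ t x + φ t x • gradx v t x

/-- The continuation of `φ² · waveDefect f₂ f₁ f₀ (logAnsatz a φ v)` to `{φ = 0}`. -/
noncomputable def scaledDefect {n : ℕ} (f₂ f₁ f₀ : ℝ → (Fin n → ℝ) → ℝ → (Fin n → ℝ) → ℝ)
    (a : ℝ) (φ v : ℝ → (Fin n → ℝ) → ℝ) (t : ℝ) (x : Fin n → ℝ) : ℝ :=
  a * minkowskiForm φ t x - a * φ t x * dAlembertian φ t x + φ t x ^ 2 * dAlembertian v t x -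
    (f₂ t x (scaledTimeDeriv a φ v t x) (scaledGrad a φ v t x) +
      φ t x * f₁ t x (scaledTimeDeriv a φ v t x) (scaledGrad a φ v t x) +
      φ t x ^ 2 * f₀ t x (scaledTimeDeriv a φ v t x) (scaledGrad a φ v t x))

section LogAnsatz

variable {n : ℕ} {a : ℝ} {φ v : ℝ → (Fin n → ℝ) → ℝ} {t : ℝ} {x : Fin n → ℝ}

lemma mul_ptd_logAnsatz
    (hφ : ContDiffAt ℝ 1 (fun q : ℝ × (Fin n → ℝ) => φ q.1 q.2) (t, x))
    (hv : ContDiffAt ℝ 1 (fun q : ℝ × (Fin n → ℝ) => v q.1 q.2) (t, x)) (h₀ : φ t x ≠ 0) :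
    φ t x * ptd (logAnsatz a φ v) t x = scaledTimeDeriv a φ v t x :=
  mul_deriv_neg_mul_log_add a ((contDiffAt_slice_fst hφ).differentiableAt one_ne_zero)
    ((contDiffAt_slice_fst hv).differentiableAt one_ne_zero) h₀

lemma smul_gradx_logAnsatz
    (hφ : ContDiffAt ℝ 1 (fun q : ℝ × (Fin n → ℝ) => φ q.1 q.2) (t, x))
    (hv : ContDiffAt ℝ 1 (fun q : ℝ × (Fin n → ℝ) => v q.1 q.2) (t, x)) (h₀ : φ t x ≠ 0) :
    φ t x • gradx (logAnsatz a φ v) t x = scaledGrad a φ v t x := by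
  funext i
  have h := mul_deriv_neg_mul_log_add a
    ((contDiffAt_slice_update i hφ).differentiableAt one_ne_zero)
    ((contDiffAt_slice_update i hv).differentiableAt one_ne_zero)
    (by rwa [Function.update_eq_self])
  simpa only [Function.update_eq_self] using! h

lemma sq_mul_ptd_ptd_logAnsatz
    (hφ : ContDiffAt ℝ 2 (fun q : ℝ × (Fin n → ℝ) => φ q.1 q.2) (t, x))
    (hv : ContDiffAt ℝ 2 (fun q : ℝ × (Fin n → ℝ) => v q.1 q.2) (t, x)) (h₀ : φ t x ≠ 0) :
    φ t x ^ 2 * ptd (ptd (logAnsatz a φ v)) t x =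
      a * ptd φ t x ^ 2 - a * φ t x * ptd (ptd φ) t x + φ t x ^ 2 * ptd (ptd v) t x :=
  sq_mul_deriv_deriv_neg_mul_log_add a (contDiffAt_slice_fst hφ) (contDiffAt_slice_fst hv) h₀

lemma sq_mul_pxd_pxd_logAnsatz (i : Fin n)
    (hφ : ContDiffAt ℝ 2 (fun q : ℝ × (Fin n → ℝ) => φ q.1 q.2) (t, x))
    (hv : ContDiffAt ℝ 2 (fun q : ℝ × (Fin n → ℝ) => v q.1 q.2) (t, x)) (h₀ : φ t x ≠ 0) :
    φ t x ^ 2 * pxd i (pxd i (logAnsatz a φ v)) t x =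
      a * pxd i φ t x ^ 2 - a * φ t x * pxd i (pxd i φ) t x +
        φ t x ^ 2 * pxd i (pxd i v) t x := by
  have h := sq_mul_deriv_deriv_neg_mul_log_add a (contDiffAt_slice_update i hφ)
    (contDiffAt_slice_update i hv) (by rwa [Function.update_eq_self])
  simpa only [pxd_pxd, Function.update_eq_self] using! h

lemma sq_mul_dAlembertian_logAnsatz
    (hφ : ContDiffAt ℝ 2 (fun q : ℝ × (Fin n → ℝ) => φ q.1 q.2) (t, x))
    (hv : ContDiffAt ℝ 2 (fun q : ℝ × (Fin n → ℝ) => v q.1 q.2) (t, x)) (h₀ : φ t x ≠ 0) :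
    φ t x ^ 2 * dAlembertian (logAnsatz a φ v) t x =
      a * minkowskiForm φ t x - a * φ t x * dAlembertian φ t x +
        φ t x ^ 2 * dAlembertian v t x := by
  have hlap : φ t x ^ 2 * lapx (logAnsatz a φ v) t x =
      a * ∑ i, gradx φ t x i ^ 2 - a * φ t x * lapx φ t x + φ t x ^ 2 * lapx v t x := by
    simp only [lapx, gradx, Finset.mul_sum, sq_mul_pxd_pxd_logAnsatz _ hφ hv h₀,
      Finset.sum_add_distrib, Finset.sum_sub_distrib]
  unfold dAlembertian minkowskiForm
  linear_combination sq_mul_ptd_ptd_logAnsatz (a := a) hφ hv h₀ - hlap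

end LogAnsatz

section Desingularization

variable {n : ℕ} {U : Set (ℝ × (Fin n → ℝ))} {f₂ f₁ f₀ : ℝ → (Fin n → ℝ) → ℝ → (Fin n → ℝ) → ℝ}
  {a : ℝ} {φ v : ℝ → (Fin n → ℝ) → ℝ} {t : ℝ} {x : Fin n → ℝ} {p : ℝ × (Fin n → ℝ)}

lemma scaledDefect_eq_sq_mul_waveDefect
    (hf₂ : HomogPoly 2 U f₂) (hf₁ : HomogPoly 1 U f₁) (hf₀ : HomogPoly 0 U f₀)
    (hφ : ContDiffAt ℝ 2 (fun q : ℝ × (Fin n → ℝ) => φ q.1 q.2) (t, x))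
    (hv : ContDiffAt ℝ 2 (fun q : ℝ × (Fin n → ℝ) => v q.1 q.2) (t, x)) (h₀ : φ t x ≠ 0) :
    scaledDefect f₂ f₁ f₀ a φ v t x =
      φ t x ^ 2 * waveDefect f₂ f₁ f₀ (logAnsatz a φ v) t x := by
  have hφ₁ := hφ.of_le one_le_two
  have hv₁ := hv.of_le one_le_two
  rw [scaledDefect, ← sq_mul_dAlembertian_logAnsatz hφ hv h₀, ← mul_ptd_logAnsatz hφ₁ hv₁ h₀,
    ← smul_gradx_logAnsatz hφ₁ hv₁ h₀, hf₂.map_smul, hf₁.map_smul, hf₀.map_smul, waveDefect]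
  ring

lemma scaledDefect_of_eq_zero (hf₂ : HomogPoly 2 U f₂) (h₀ : φ t x = 0) :
    scaledDefect f₂ f₁ f₀ a φ v t x =
      a * (minkowskiForm φ t x - a * f₂ t x (ptd φ t x) (gradx φ t x)) := by
  simp only [scaledDefect, scaledTimeDeriv, scaledGrad, h₀, zero_mul, zero_smul, add_zero,
    hf₂.map_smul]
  ring

lemma analyticAt_dAlembertian (hv : AnalyticAt ℝ (fun q : ℝ × (Fin n → ℝ) => v q.1 q.2) p) :
    AnalyticAt ℝ (fun q : ℝ × (Fin n → ℝ) => dAlembertian v q.1 q.2) p :=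
  (analyticAt_ptd (analyticAt_ptd hv)).sub
    (Finset.analyticAt_fun_sum _ fun i _ => analyticAt_pxd i (analyticAt_pxd i hv))

lemma analyticAt_minkowskiForm (hφ : AnalyticAt ℝ (fun q : ℝ × (Fin n → ℝ) => φ q.1 q.2) p) :
    AnalyticAt ℝ (fun q : ℝ × (Fin n → ℝ) => minkowskiForm φ q.1 q.2) p :=
  ((analyticAt_ptd hφ).pow 2).sub
    (Finset.analyticAt_fun_sum _ fun i _ => (analyticAt_pxd i hφ).pow 2)

lemma analyticAt_scaledDefect
    (hf₂ : HomogPoly 2 U f₂) (hf₁ : HomogPoly 1 U f₁) (hf₀ : HomogPoly 0 U f₀) (hp : p ∈ U)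
    (hφ : AnalyticAt ℝ (fun q : ℝ × (Fin n → ℝ) => φ q.1 q.2) p)
    (hv : AnalyticAt ℝ (fun q : ℝ × (Fin n → ℝ) => v q.1 q.2) p) :
    AnalyticAt ℝ (fun q : ℝ × (Fin n → ℝ) => scaledDefect f₂ f₁ f₀ a φ v q.1 q.2) p := by
  have hτ : AnalyticAt ℝ (fun q : ℝ × (Fin n → ℝ) => scaledTimeDeriv a φ v q.1 q.2) p :=
    (analyticAt_const.mul (analyticAt_ptd hφ)).add (hφ.mul (analyticAt_ptd hv))
  have hξ (i : Fin n) :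
      AnalyticAt ℝ (fun q : ℝ × (Fin n → ℝ) => scaledGrad a φ v q.1 q.2 i) p :=
    (analyticAt_const.mul (analyticAt_pxd i hφ)).add (hφ.mul (analyticAt_pxd i hv))
  have hwave : AnalyticAt ℝ (fun q : ℝ × (Fin n → ℝ) => a * minkowskiForm φ q.1 q.2 -
      a * φ q.1 q.2 * dAlembertian φ q.1 q.2 + φ q.1 q.2 ^ 2 * dAlembertian v q.1 q.2) p :=
    ((analyticAt_const.mul (analyticAt_minkowskiForm hφ)).sub
      ((analyticAt_const.mul hφ).mul (analyticAt_dAlembertian hφ))).add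
      ((hφ.pow 2).mul (analyticAt_dAlembertian hv))
  exact hwave.sub (((hf₂.analyticAt hp hτ hξ).add (hφ.mul (hf₁.analyticAt hp hτ hξ))).add
    ((hφ.pow 2).mul (hf₀.analyticAt hp hτ hξ)))

end Desingularization

section Graph

variable {n : ℕ} (ψ : (Fin n → ℝ) → ℝ) (t : ℝ) (x : Fin n → ℝ)

lemma ptd_sub_graph : ptd (fun t x => t - ψ x) t x = 1 := by
  simp [ptd]

lemma gradx_sub_graph : gradx (fun t x => t - ψ x) t x = -gradp ψ x := by
  funext i
  simp [gradx, pxd, gradp]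

lemma minkowskiForm_sub_graph :
    minkowskiForm (fun t x => t - ψ x) t x = 1 - ∑ i, gradp ψ x i ^ 2 := by
  simp [minkowskiForm, ptd_sub_graph, gradx_sub_graph]

lemma minkowskiForm_sub_graph_eq_iff {U : Set (ℝ × (Fin n → ℝ))}
    {g : ℝ → (Fin n → ℝ) → ℝ → (Fin n → ℝ) → ℝ} (hg : HomogPoly 2 U g) {a : ℝ} :
    minkowskiForm (fun t x => t - ψ x) t x =
        a * g t x (ptd (fun t x => t - ψ x) t x) (gradx (fun t x => t - ψ x) t x) ↔
      1 - ∑ i, gradp ψ x i ^ 2 = a * g t x (-1) (gradp ψ x) := by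
  have heven : g t x 1 (-gradp ψ x) = g t x (-1) (gradp ψ x) := by
    simpa using hg.map_neg t x (-1) (gradp ψ x)
  rw [minkowskiForm_sub_graph, ptd_sub_graph, gradx_sub_graph, heven]

variable {ψ} in
lemma analyticOnNhd_sub_graph {S : Set (ℝ × (Fin n → ℝ))}
    (hψ : AnalyticOnNhd ℝ ψ {x | (ψ x, x) ∈ S}) :
    AnalyticOnNhd ℝ (fun p : ℝ × (Fin n → ℝ) => p.1 - ψ p.2) {p ∈ S | p.1 - ψ p.2 = 0} := by
  rintro ⟨t, x⟩ ⟨hp, ht⟩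
  obtain rfl : t = ψ x := sub_eq_zero.1 ht
  exact analyticAt_fst.sub ((hψ x hp).comp_of_eq analyticAt_snd rfl)

end Graph

theorem stmt6_general {n : ℕ} {U : Set (ℝ × (Fin n → ℝ))} (hU : IsOpen U)
    {f₂ f₁ f₀ : ℝ → (Fin n → ℝ) → ℝ → (Fin n → ℝ) → ℝ}
    (hf₂ : HomogPoly 2 U f₂) (hf₁ : HomogPoly 1 U f₁) (hf₀ : HomogPoly 0 U f₀)
    {φ v : ℝ → (Fin n → ℝ) → ℝ} {a : ℝ}
    (hφ : AnalyticOnNhd ℝ (fun p : ℝ × (Fin n → ℝ) => φ p.1 p.2) {p ∈ U | φ p.1 p.2 = 0})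
    (hv : AnalyticOnNhd ℝ (fun p : ℝ × (Fin n → ℝ) => v p.1 p.2) U)
    (hcond : ∀ t x, (t, x) ∈ U → φ t x = 0 →
      minkowskiForm φ t x = a * f₂ t x (ptd φ t x) (gradx φ t x)) :
    ∃ Ω : Set (ℝ × (Fin n → ℝ)), IsOpen Ω ∧ {p ∈ U | φ p.1 p.2 = 0} ⊆ Ω ∧ Ω ⊆ U ∧
      ∃ G : ℝ → (Fin n → ℝ) → ℝ,
        AnalyticOnNhd ℝ (fun p : ℝ × (Fin n → ℝ) => G p.1 p.2) Ω ∧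
        (∀ t x, (t, x) ∈ Ω → 0 < φ t x →
          G t x = φ t x ^ 2 * waveDefect f₂ f₁ f₀ (logAnsatz a φ v) t x) ∧
        ∀ t x, (t, x) ∈ Ω → φ t x = 0 → G t x = 0 := by
  refine ⟨U ∩ {p | AnalyticAt ℝ (fun q : ℝ × (Fin n → ℝ) => φ q.1 q.2) p},
    hU.inter (isOpen_analyticAt ℝ _), fun p hp => ⟨hp.1, hφ p hp⟩, Set.inter_subset_left,
    scaledDefect f₂ f₁ f₀ a φ v, ?analytic, ?off_zero_set, ?on_zero_set⟩
  case analytic =>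
    exact fun p hp => analyticAt_scaledDefect hf₂ hf₁ hf₀ hp.1 hp.2 (hv p hp.1)
  case off_zero_set =>
    exact fun t x hp hpos => scaledDefect_eq_sq_mul_waveDefect hf₂ hf₁ hf₀ hp.2.contDiffAt
      (hv _ hp.1).contDiffAt hpos.ne'
  case on_zero_set =>
    intro t x hp h₀
    rw [scaledDefect_of_eq_zero hf₂ h₀, hcond t x hp.1 h₀, sub_self, mul_zero]

/-- Under the structural condition `1 - |∇ψ|² = a f₂(ψ(x),x;-1,∇ψ)`, for any analytic `v`
and `u = -a log(t-ψ) + v`, the function `(t-ψ)²(u_tt - Δu - f(t,x;∂_t u,∇u))` extends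
analytically across `Σ = {t = ψ(x)}` with vanishing restriction to `Σ`: the `1/(t-ψ)²`
singularity cancels exactly. -/
theorem stmt6 {n : ℕ} (U : Set (ℝ × (Fin n → ℝ))) (hU : IsOpen U)
    (f₂ f₁ f₀ : ℝ → (Fin n → ℝ) → ℝ → (Fin n → ℝ) → ℝ)
    (hf₂ : HomogPoly 2 U f₂) (hf₁ : HomogPoly 1 U f₁) (hf₀ : HomogPoly 0 U f₀)
    (ψ : (Fin n → ℝ) → ℝ) (hψ : AnalyticOnNhd ℝ ψ {x | (ψ x, x) ∈ U})
    (a : ℝ) (ha : a ≠ 0)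
    (hcond : ∀ x, (ψ x, x) ∈ U →
      1 - ∑ i, gradp ψ x i ^ 2 = a * f₂ (ψ x) x (-1) (gradp ψ x))
    (W : Set (ℝ × (Fin n → ℝ))) (hW : IsOpen W) (hWU : W ⊆ U)
    (hSW : {p ∈ U | p.1 = ψ p.2} ⊆ W)
    (v : ℝ → (Fin n → ℝ) → ℝ)
    (hv : AnalyticOnNhd ℝ (fun p : ℝ × (Fin n → ℝ) => v p.1 p.2) W) :
    ∃ Ω : Set (ℝ × (Fin n → ℝ)), IsOpen Ω ∧ {p ∈ U | p.1 = ψ p.2} ⊆ Ω ∧ Ω ⊆ W ∧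
      ∃ G : ℝ → (Fin n → ℝ) → ℝ,
        AnalyticOnNhd ℝ (fun p : ℝ × (Fin n → ℝ) => G p.1 p.2) Ω ∧
        (∀ t x, (t, x) ∈ Ω → ψ x < t →
          G t x =
            (t - ψ x) ^ 2 *
              (ptd (ptd (fun t x => -a * Real.log (t - ψ x) + v t x)) t x
                - lapx (fun t x => -a * Real.log (t - ψ x) + v t x) t x
                - (f₂ t x (ptd (fun t x => -a * Real.log (t - ψ x) + v t x) t x)
                      (gradx (fun t x => -a * Real.log (t - ψ x) + v t x) t x)
                    + f₁ t x (ptd (fun t x => -a * Real.log (t - ψ x) + v t x) t x)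
                      (gradx (fun t x => -a * Real.log (t - ψ x) + v t x) t x)
                    + f₀ t x (ptd (fun t x => -a * Real.log (t - ψ x) + v t x) t x)
                      (gradx (fun t x => -a * Real.log (t - ψ x) + v t x) t x)))) ∧
        ∀ x, (ψ x, x) ∈ Ω → G (ψ x) x = 0 := by
  have heikonal : ∀ t x, (t, x) ∈ W → t - ψ x = 0 → minkowskiForm (fun t x => t - ψ x) t x =
      a * f₂ t x (ptd (fun t x => t - ψ x) t x) (gradx (fun t x => t - ψ x) t x) := by
    intro t x hp ht
    obtain rfl := sub_eq_zero.1 ht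
    exact (minkowskiForm_sub_graph_eq_iff ψ (ψ x) x hf₂).2 (hcond x (hWU hp))
  obtain ⟨Ω, hΩ, hsub, hΩW, G, hG, hGpos, hGzero⟩ :=
    stmt6_general hW (hf₂.mono hWU) (hf₁.mono hWU) (hf₀.mono hWU)
      (analyticOnNhd_sub_graph fun x hx => hψ x (hWU hx)) hv heikonal
  exact ⟨Ω, hΩ, fun p hp => hsub ⟨hSW hp, sub_eq_zero.2 hp.2⟩, hΩW, G, hG,
    fun t x hp ht => hGpos t x hp (sub_pos.2 ht), fun x hp => hGzero _ x hp (sub_self _)⟩
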